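/- The abelianization G/[G,G] of the group G is an r-group, i.e., every element of the quotient of G by its commutator subgroup has order a power of r. -/

import Mathlib

/-!
Over a finite field `K` of odd order `q` let `C` be the Fourier matrix of a primitive additive
character `ψ`, let `Q a` be the diagonal matrix with entries `ψ (a * k ^ 2)`, and let `g a` be its
trace. Completing the square gives `C * Q (-½) * C = g (-½) • (Q ½ * C * Q ½)`. Taking
determinants, `det C = g (-½) ^ q * v ^ 3` with `v = det (Q ½)`, while `g ^ 2 = χ(-1) * q` says
that `(-q) ^ ((q - 1) / 2) = g (-½) ^ (q - 1)`. Hence after rescaling `C` by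
`(-q) ^ ((q - 1) / 2) / det C` the Gauss sum in the first relation is replaced by `v ^ (-3)`,
whose order divides the characteristic `p`. In the abelianization this relation reads
`c = z * u ^ 3` with `z ^ p = u ^ p = 1`, so every generator is killed by `p`.
-/

open Matrix Subgroup
open scoped Kronecker

section Group

variable {G : Type*} [Group G]

theorem isPGroup_of_closure_eq_top {A : Type*} [CommGroup A] {p : ℕ} {S : Set A}
    (hS : closure S = ⊤) (h : ∀ x ∈ S, x ^ p = 1) : IsPGroup p A := by
  have hpow : powMonoidHom p = (1 : A →* A) := MonoidHom.eq_of_eqOn_dense hS h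
  exact fun x => ⟨1, (pow_one p).symm ▸ DFunLike.congr_fun hpow x⟩

theorem isPGroup_abelianization_closure {p : ℕ} {S : Set G}
    (h : ∀ x : closure S, (x : G) ∈ S → Abelianization.of x ^ p = 1) :
    IsPGroup p (Abelianization (closure S)) := by
  refine isPGroup_of_closure_eq_top (S := Abelianization.of '' (((↑) : closure S → G) ⁻¹' S)) ?_ ?_
  · rw [← MonoidHom.map_closure, closure_closure_coe_preimage, ← MonoidHom.range_eq_map,
      MonoidHom.range_eq_top]
    exact QuotientGroup.mk'_surjective _
  · rintro _ ⟨x, hx, rfl⟩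
    exact h x hx

theorem map_pow_eq_one_of_braid {A : Type*} [CommGroup A] (f : G →* A) {c u : G} {n : ℕ}
    (hu : u ^ n = 1) (hcu : (c * u⁻¹ * c * (u * c * u)⁻¹) ^ n = 1) : f c ^ n = 1 := by
  have hc : f c = f (c * u⁻¹ * c * (u * c * u)⁻¹) * f u ^ 3 := by
    simp only [map_mul, map_inv]
    apply Additive.ofMul.injective
    simp only [ofMul_mul, ofMul_inv, ofMul_pow]
    abel
  rw [hc, mul_pow, ← map_pow, hcu, pow_right_comm, ← map_pow, hu, map_one, one_pow, one_mul]

theorem isPGroup_abelianization_closure_of_braid {ι : Type*} {p : ℕ} {c u : ι → G} {S : Set G}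
    (hu : ∀ t, u t ^ p = 1)
    (hcu : ∀ t, (c t * (u t)⁻¹ * c t * (u t * c t * u t)⁻¹) ^ p = 1)
    (hS : ∀ x ∈ S, x ^ p = 1) :
    IsPGroup p (Abelianization (closure (Set.range c ∪ Set.range u ∪ S))) := by
  have of_pow (x : closure (Set.range c ∪ Set.range u ∪ S)) (hx : (x : G) ^ p = 1) :
      Abelianization.of x ^ p = 1 := by
    rw [← map_pow, Subtype.ext (a1 := x ^ p) (a2 := 1) hx, map_one]
  refine isPGroup_abelianization_closure ?_
  rintro ⟨_, hx⟩ ((⟨t, rfl⟩ | ⟨t, rfl⟩) | hxS)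
  · have hut : u t ∈ closure (Set.range c ∪ Set.range u ∪ S) :=
      subset_closure (.inl (.inr ⟨t, rfl⟩))
    exact map_pow_eq_one_of_braid _ (u := ⟨u t, hut⟩) (Subtype.ext (hu t)) (Subtype.ext (hcu t))
  · exact of_pow _ (hu t)
  · exact of_pow _ (hS _ hxS)

theorem units_mul_inv_pow_eq_one_of_eq_smul {R A : Type*} [CommSemiring R] [Semiring A]
    [Algebra R A] {x y : Aˣ} {μ : R} {n : ℕ} (hxy : (x : A) = μ • (y : A)) (hμ : μ ^ n = 1) :
    (x * y⁻¹) ^ n = 1 := by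
  ext
  rw [Units.val_pow_eq_pow_val, Units.val_mul, hxy, smul_mul_assoc, Units.mul_inv, smul_pow, hμ,
    one_pow, one_smul, Units.val_one]

end Group

section SiteMatrix

variable {ι n R : Type*} [Fintype ι] [DecidableEq ι] [DecidableEq n] [CommSemiring R]

/-- A matrix `M` acting on the `t`-th tensor factor of `(n → R)^{⊗ι}`. The tensor power is encoded
as the space of functions on `ι → n`, whose index set splits as `n × ({i // i ≠ t} → n)`. -/
def siteMatrix (t : ι) (M : Matrix n n R) : Matrix (ι → n) (ι → n) R :=
  (M ⊗ₖ (1 : Matrix ({i // i ≠ t} → n) ({i // i ≠ t} → n) R)).submatrix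
    (Equiv.funSplitAt t n) (Equiv.funSplitAt t n)

theorem siteMatrix_apply (t : ι) (M : Matrix n n R) (η ξ : ι → n)
    [Decidable (∀ i, i ≠ t → η i = ξ i)] :
    siteMatrix t M η ξ = if ∀ i, i ≠ t → η i = ξ i then M (η t) (ξ t) else 0 := by
  simp [siteMatrix, one_apply, funext_iff]

theorem siteMatrix_smul (t : ι) (c : R) (M : Matrix n n R) :
    siteMatrix t (c • M) = c • siteMatrix t M := by
  simp only [siteMatrix, smul_kronecker, submatrix_smul, Pi.smul_apply]

theorem siteMatrix_diagonal (t : ι) (d : n → R) :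
    siteMatrix t (diagonal d) = diagonal fun ξ => d (ξ t) := by
  rw [siteMatrix, ← diagonal_one, diagonal_kronecker_diagonal, submatrix_diagonal_equiv]
  simp [Function.comp_def]

theorem siteMatrix_one (t : ι) : siteMatrix t (1 : Matrix n n R) = 1 := by
  rw [siteMatrix, one_kronecker_one, submatrix_one_equiv]

theorem siteMatrix_mul [Fintype n] (t : ι) (M N : Matrix n n R) :
    siteMatrix t (M * N) = siteMatrix t M * siteMatrix t N := by
  rw [siteMatrix, siteMatrix, siteMatrix, submatrix_mul_equiv, ← mul_kronecker_mul, one_mul]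

end SiteMatrix

section Characters

variable {K R : Type*}

theorem addChar_pow_char [CommRing K] [Monoid R] (p : ℕ) [CharP K p] (ψ : AddChar K R) (x : K) :
    ψ x ^ p = 1 := by
  rw [← AddChar.map_nsmul_eq_pow, ← Nat.cast_smul_eq_nsmul K, CharP.cast_eq_zero,
    zero_smul, AddChar.map_zero_eq_one]

theorem diagonal_addChar_pow_char [CommRing K] [Semiring R] {n : Type*} [Fintype n] [DecidableEq n]
    (p : ℕ) [CharP K p] (ψ : AddChar K R) (f : n → K) :
    diagonal (fun k => ψ (f k)) ^ p = 1 := by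
  rw [diagonal_pow, ← diagonal_one]
  exact congrArg _ (funext fun k => addChar_pow_char p ψ (f k))

theorem card_ne_zero_of_isPrimitive [Field K] [Fintype K] [CommRing R] [IsDomain R]
    {ψ : AddChar K R} (hψ : ψ.IsPrimitive) : (Fintype.card K : R) ≠ 0 := by
  intro hcard
  obtain ⟨p, hp, n, hprime, hq⟩ := FiniteField.card' K
  have : Fact p.Prime := ⟨hprime⟩
  rw [hq, Nat.cast_pow, pow_eq_zero_iff n.ne_zero] at hcard
  have : CharP R p := (CharP.charP_iff_prime_eq_zero hprime).mpr hcard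
  refine hψ one_ne_zero (AddChar.ext _ _ fun x => ?_)
  rw [AddChar.mulShift_apply, one_mul, AddChar.one_apply]
  exact frobenius_inj R p (by rw [frobenius_def, addChar_pow_char p, map_one])

/-- The Gauss sum `∑ k, ψ (a * k ^ 2)` of a quadratic phase. -/
def quadraticGaussSum [CommRing K] [Fintype K] [CommSemiring R] (ψ : AddChar K R) (a : K) : R :=
  ∑ k, ψ (a * k ^ 2)

theorem quadraticGaussSum_mul_neg [CommRing K] [Fintype K] [CommRing R] [IsDomain R]
    {ψ : AddChar K R} (hψ : ψ.IsPrimitive) {a : K} (ha : IsUnit (2 * a)) :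
    quadraticGaussSum ψ a * quadraticGaussSum ψ (-a) = Fintype.card K := by
  classical
  calc quadraticGaussSum ψ a * quadraticGaussSum ψ (-a)
      = ∑ l, ∑ k, ψ (a * k ^ 2) * ψ (-a * l ^ 2) := by
        simp only [quadraticGaussSum, Finset.sum_mul_sum]
        exact Finset.sum_comm
    _ = ∑ l, ∑ m, ψ (a * m ^ 2) * ψ (l * (2 * a * m)) := by
        refine Fintype.sum_congr _ _ fun l => Fintype.sum_equiv (Equiv.subRight l) _ _ fun k => ?_
        simp only [← AddChar.map_add_eq_mul, Equiv.subRight_apply]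
        ring_nf
    _ = ∑ m, ψ (a * m ^ 2) * ∑ l, ψ (l * (2 * a * m)) := by
        rw [Finset.sum_comm]
        simp only [Finset.mul_sum]
    _ = Fintype.card K := by
        simp [AddChar.sum_mulShift _ hψ, ha.mul_right_eq_zero]

section

variable [Field K] [Fintype K]

theorem sum_comp_sq [DecidableEq K] [CommRing R] (hK : ringChar K ≠ 2) (f : K → R) :
    ∑ k, f (k ^ 2) = ∑ x, ((quadraticChar K x : ℤ) + 1 : R) * f x := by
  rw [← Finset.sum_fiberwise' Finset.univ (· ^ 2) f]
  refine Fintype.sum_congr _ _ fun x => ?_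
  have hcard := congrArg (Int.cast : ℤ → R) (quadraticChar_card_sqrts hK x)
  rw [Set.toFinset_ofPred] at hcard
  push_cast at hcard
  rw [Finset.sum_const, nsmul_eq_mul, hcard]

variable [CommRing R] [IsDomain R] {ψ : AddChar K R} {a : K}

theorem quadraticGaussSum_eq_gaussSum [DecidableEq K] (hK : ringChar K ≠ 2) (hψ : ψ.IsPrimitive)
    (ha : a ≠ 0) :
    quadraticGaussSum ψ a =
      gaussSum ((quadraticChar K).ringHomComp (Int.castRingHom R)) (ψ.mulShift a) := by
  have hsum : ∑ x, ψ (a * x) = 0 := by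
    simpa [ha, mul_comm a] using AddChar.sum_mulShift a hψ
  simp [quadraticGaussSum, sum_comp_sq hK fun x => ψ (a * x), gaussSum, add_mul,
    Finset.sum_add_distrib, hsum]

theorem quadraticGaussSum_sq [DecidableEq K] (hK : ringChar K ≠ 2) (hψ : ψ.IsPrimitive)
    (ha : a ≠ 0) :
    quadraticGaussSum ψ a ^ 2 = (quadraticChar K (-1) : ℤ) * (Fintype.card K : R) := by
  have hneg : quadraticGaussSum ψ a =
      (quadraticChar K (-1) : ℤ) * quadraticGaussSum ψ (-a) := by
    rw [quadraticGaussSum_eq_gaussSum hK hψ ha,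
      quadraticGaussSum_eq_gaussSum hK hψ (neg_ne_zero.mpr ha)]
    simpa [AddChar.mulShift_mulShift] using
      (gaussSum_mulShift ((quadraticChar K).ringHomComp (Int.castRingHom R)) (ψ.mulShift a)
        (-1)).symm
  have h2a : IsUnit (2 * a) := (mul_ne_zero (Ring.two_ne_zero hK) ha).isUnit
  rw [← quadraticGaussSum_mul_neg hψ h2a, sq]
  nth_rewrite 2 [hneg]
  ring

theorem quadraticGaussSum_pow_card_sub_one (hK : ringChar K ≠ 2) (hψ : ψ.IsPrimitive)
    (ha : a ≠ 0) :
    quadraticGaussSum ψ a ^ (Fintype.card K - 1) =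
      (-(Fintype.card K : R)) ^ ((Fintype.card K - 1) / 2) := by
  classical
  have hodd := FiniteField.odd_card_of_char_ne_two hK
  have hsign : quadraticChar K (-1) = (-1) ^ (Fintype.card K / 2) := by
    rw [quadraticChar_neg_one hK, ZMod.χ₄_eq_neg_one_pow hodd]
  obtain ⟨m, hm⟩ := Nat.odd_iff.mpr hodd
  rw [show (Fintype.card K - 1) / 2 = m by lia, show Fintype.card K - 1 = 2 * m by lia, pow_mul,
    quadraticGaussSum_sq hK hψ ha, hsign, show Fintype.card K / 2 = m by lia,
    neg_pow (Fintype.card K : R), mul_pow]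
  push_cast
  rw [← pow_mul, neg_one_pow_congr (by grind : Even (m * m) ↔ Even m)]

end

end Characters

section Fourier

variable {K R : Type*} [Fintype K] [DecidableEq K]

/-- The matrix of the Fourier transform on `K` with kernel `ψ`. -/
def fourierMatrix [CommRing K] [CommRing R] (ψ : AddChar K R) : Matrix K K R :=
  .of fun i j => ψ (i * j)

/-- Multiplication by the quadratic phase `k ↦ ψ (a * k ^ 2)`. -/
def chirpMatrix [CommRing K] [CommRing R] (ψ : AddChar K R) (a : K) : Matrix K K R :=
  diagonal fun k => ψ (a * k ^ 2)

section

variable [CommRing K] [CommRing R] (ψ : AddChar K R)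

theorem chirpMatrix_pow_char (p : ℕ) [CharP K p] (a : K) : chirpMatrix ψ a ^ p = 1 :=
  diagonal_addChar_pow_char p ψ _

theorem chirpMatrix_mul_chirpMatrix_neg (a : K) : chirpMatrix ψ a * chirpMatrix ψ (-a) = 1 := by
  simp [chirpMatrix, ← AddChar.map_add_eq_mul]

/-- Completing the square: `i k - a k² + k j = a i² + i j + a j² - a (k - (i + j))²`. -/
theorem fourierMatrix_mul_chirpMatrix_neg_mul_fourierMatrix {a : K} (ha : 2 * a = 1) :
    fourierMatrix ψ * chirpMatrix ψ (-a) * fourierMatrix ψ =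
      quadraticGaussSum ψ (-a) • (chirpMatrix ψ a * fourierMatrix ψ * chirpMatrix ψ a) := by
  ext i j
  rw [Matrix.mul_apply]
  simp only [fourierMatrix, chirpMatrix, quadraticGaussSum, mul_diagonal, diagonal_mul,
    Matrix.smul_apply, of_apply, smul_eq_mul, ← AddChar.map_add_eq_mul, Finset.sum_mul]
  refine Fintype.sum_equiv (Equiv.subRight (i + j)) _ _ fun k => congrArg ψ ?_
  simp only [Equiv.subRight_apply]
  linear_combination (i * j - i * k - j * k) * ha

theorem det_chirpMatrix_pow_char (p : ℕ) [CharP K p] (a : K) : (chirpMatrix ψ a).det ^ p = 1 := by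
  rw [← det_pow, chirpMatrix_pow_char, det_one]

end

variable [Field K]

theorem det_fourierMatrix_ne_zero [CommRing R] [IsDomain R] {ψ : AddChar K R}
    (hψ : ψ.IsPrimitive) : (fourierMatrix ψ).det ≠ 0 := by
  have hinv : fourierMatrix ψ * fourierMatrix ψ⁻¹ = (Fintype.card K : R) • 1 := by
    ext i j
    have hentry (k : K) : ψ (i * k) * ψ (-(k * j)) = ψ (k * (i - j)) := by
      rw [← AddChar.map_add_eq_mul]
      ring_nf
    simp [fourierMatrix, mul_apply, hentry, AddChar.sum_mulShift _ hψ, one_apply, sub_eq_zero]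
  have hdet := congrArg det hinv
  rw [det_mul, det_smul, det_one, mul_one] at hdet
  exact left_ne_zero_of_mul (hdet ▸ pow_ne_zero _ (card_ne_zero_of_isPrimitive hψ))

section

variable {F : Type*} [Field F] {ψ : AddChar K F} {a : K}

theorem det_fourierMatrix (hψ : ψ.IsPrimitive) (ha : 2 * a = 1) :
    (fourierMatrix ψ).det =
      quadraticGaussSum ψ (-a) ^ Fintype.card K * (chirpMatrix ψ a).det ^ 3 := by
  have hrel := congrArg det (fourierMatrix_mul_chirpMatrix_neg_mul_fourierMatrix ψ ha)
  have hchirp := congrArg det (chirpMatrix_mul_chirpMatrix_neg ψ a)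
  simp only [det_mul, det_smul, det_one] at hrel hchirp
  refine mul_right_cancel₀ (det_fourierMatrix_ne_zero hψ) ?_
  linear_combination (chirpMatrix ψ a).det * hrel - (fourierMatrix ψ).det ^ 2 * hchirp

/-- The factor `λ` which rescales the Fourier matrix to an operator of the Weil representation. -/
noncomputable def weilScalar (ψ : AddChar K F) : F :=
  (-(Fintype.card K : F)) ^ ((Fintype.card K - 1) / 2) * (fourierMatrix ψ).det⁻¹

theorem weilScalar_mul_quadraticGaussSum (hK : ringChar K ≠ 2) (hψ : ψ.IsPrimitive)
    (ha : 2 * a = 1) :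
    weilScalar ψ * quadraticGaussSum ψ (-a) = ((chirpMatrix ψ a).det ^ 3)⁻¹ := by
  have ha0 : -a ≠ 0 := neg_ne_zero.mpr (right_ne_zero_of_mul_eq_one ha)
  have hdet := det_fourierMatrix hψ ha
  have hne := hdet ▸ det_fourierMatrix_ne_zero hψ
  rw [weilScalar, ← quadraticGaussSum_pow_card_sub_one hK hψ ha0, mul_right_comm, ← pow_succ,
    Nat.sub_add_cancel Fintype.card_pos, hdet, mul_inv,
    mul_inv_cancel_left₀ (left_ne_zero_of_mul hne)]

/-- The Weil operator of the Fourier transform, i.e. the generator `λ • C_1` when `ℓ = 1`. -/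
noncomputable def weilMatrix (ψ : AddChar K F) : Matrix K K F :=
  weilScalar ψ • fourierMatrix ψ

theorem weilMatrix_mul_chirpMatrix_neg_mul_weilMatrix (hK : ringChar K ≠ 2) (hψ : ψ.IsPrimitive)
    (ha : 2 * a = 1) :
    weilMatrix ψ * chirpMatrix ψ (-a) * weilMatrix ψ =
      ((chirpMatrix ψ a).det ^ 3)⁻¹ • (chirpMatrix ψ a * weilMatrix ψ * chirpMatrix ψ a) := by
  simp only [weilMatrix, Matrix.smul_mul, Matrix.mul_smul,
    fourierMatrix_mul_chirpMatrix_neg_mul_fourierMatrix ψ ha,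
    ← weilScalar_mul_quadraticGaussSum hK hψ ha, smul_smul]
  ring_nf

end

end Fourier

section ZModChar

theorem zmodChar_half_mul_sq {r : ℕ} [NeZero r] {M : Type*} [CommMonoid M] {θ : M} (hr : Odd r)
    (hθ : θ ^ r = 1) {a : ZMod r} (ha : 2 * a = 1) (x : ZMod r) :
    AddChar.zmodChar r hθ (a * x ^ 2) = θ ^ (x.val * (x.val + r) / 2) := by
  have heven : Even (x.val * (x.val + r)) := by
    rw [Nat.even_mul, Nat.even_add]
    grind
  obtain ⟨c, hc⟩ := heven.two_dvd
  have hx : x ^ 2 = 2 * c := by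
    simpa [sq] using congrArg (Nat.cast : ℕ → ZMod r) hc
  rw [hc, Nat.mul_div_cancel_left _ two_pos, ← AddChar.zmodChar_apply' hθ, hx]
  congr 1
  linear_combination (c : ZMod r) * ha

variable {r : ℕ} [Fact r.Prime] {F : Type*} [Field F] {θ : F} {ι : Type*} [Fintype ι]
  [DecidableEq ι]

theorem siteMatrix_weilMatrix_zmodChar (hθ : θ ^ r = 1) (t : ι)
    [∀ η ξ : ι → ZMod r, Decidable (∀ i, i ≠ t → η i = ξ i)] :
    siteMatrix t (weilMatrix (AddChar.zmodChar r hθ)) =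
      ((-(r : F)) ^ ((r - 1) / 2) * (fourierMatrix (AddChar.zmodChar r hθ)).det⁻¹) •
        of fun η ξ => if ∀ i, i ≠ t → η i = ξ i then θ ^ (η t * ξ t).val else 0 := by
  rw [weilMatrix, siteMatrix_smul, weilScalar, ZMod.card]
  congr 1
  ext η ξ
  exact siteMatrix_apply t _ η ξ

theorem siteMatrix_chirpMatrix_zmodChar (hr : Odd r) (hθ : θ ^ r = 1) (t : ι) :
    siteMatrix t (chirpMatrix (AddChar.zmodChar r hθ) 2⁻¹) =
      diagonal fun ξ => θ ^ ((ξ t).val * ((ξ t).val + r) / 2) := by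
  have half : 2 * (2⁻¹ : ZMod r) = 1 := mod_cast ZMod.coe_mul_inv_eq_one 2 hr.coprime_two_left
  simp only [chirpMatrix, siteMatrix_diagonal, zmodChar_half_mul_sq hr hθ half]

end ZModChar

theorem weil_abelianization_rgroup_general
    {p : ℕ} (hp : p ≠ 2) {K : Type*} [Field K] [Fintype K] [DecidableEq K] [CharP K p]
    {F : Type*} [Field F] {ψ : AddChar K F} (hψ : ψ.IsPrimitive)
    {ι : Type*} [Fintype ι] [DecidableEq ι] (rel : ι → ι → Prop)
    (uC uU : ι → (Matrix (ι → K) (ι → K) F)ˣ) (uD : ι → ι → (Matrix (ι → K) (ι → K) F)ˣ)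
    (huC : ∀ t, (uC t : Matrix (ι → K) (ι → K) F) = siteMatrix t (weilMatrix ψ))
    (huU : ∀ t, (uU t : Matrix (ι → K) (ι → K) F) = siteMatrix t (chirpMatrix ψ 2⁻¹))
    (huD : ∀ s t, rel s t →
      (uD s t : Matrix (ι → K) (ι → K) F) = diagonal fun ξ => ψ (ξ s * ξ t)) :
    IsPGroup p (Abelianization (closure (Set.range uC ∪ Set.range uU ∪
      {x | ∃ s t, rel s t ∧ x = uD s t}))) := by
  have hK : ringChar K ≠ 2 := ringChar.eq K p ▸ hp
  have half : 2 * (2⁻¹ : K) = 1 := mul_inv_cancel₀ (Ring.two_ne_zero hK)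
  refine isPGroup_abelianization_closure_of_braid (fun t => Units.ext ?_) (fun t => ?_) ?_
  · rw [Units.val_pow_eq_pow_val, huU, chirpMatrix, siteMatrix_diagonal,
      diagonal_addChar_pow_char p, Units.val_one]
  · have huUinv : ((uU t)⁻¹ : (Matrix (ι → K) (ι → K) F)ˣ).val =
        siteMatrix t (chirpMatrix ψ (-2⁻¹)) := by
      refine Units.inv_eq_of_mul_eq_one_right ?_
      rw [huU, ← siteMatrix_mul, chirpMatrix_mul_chirpMatrix_neg, siteMatrix_one]
    refine units_mul_inv_pow_eq_one_of_eq_smul (μ := ((chirpMatrix ψ 2⁻¹).det ^ 3)⁻¹) ?_ ?_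
    · simp only [Units.val_mul, huUinv, huC, huU, ← siteMatrix_mul, ← siteMatrix_smul,
        weilMatrix_mul_chirpMatrix_neg_mul_weilMatrix hK hψ half]
    · rw [inv_pow, pow_right_comm, det_chirpMatrix_pow_char ψ p, one_pow, inv_one]
  · rintro _ ⟨s, t, hst, rfl⟩
    ext1
    rw [Units.val_pow_eq_pow_val, huD s t hst, diagonal_addChar_pow_char p, Units.val_one]

/-- The abelianization `G/[G,G]` is an `r`-group. -/
theorem weil_abelianization_rgroup
    {r : ℕ} [Fact (Nat.Prime r)] (hr : Odd r)
    {𝔽 : Type*} [Field 𝔽] {θ : 𝔽} (hθ : IsPrimitiveRoot θ r)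
    {ℓ : ℕ} (hℓ : 1 ≤ ℓ)
    (Cb : Matrix (ZMod r) (ZMod r) 𝔽)
    (hCb : ∀ i j : ZMod r, Cb i j = θ ^ (i * j).val)
    (lam : 𝔽) (hlam : lam = (-(r : 𝔽)) ^ ((r - 1) / 2) * Cb.det⁻¹)
    (uC uU : Fin ℓ → (Matrix (Fin ℓ → ZMod r) (Fin ℓ → ZMod r) 𝔽)ˣ)
    (uD : Fin ℓ → Fin ℓ → (Matrix (Fin ℓ → ZMod r) (Fin ℓ → ZMod r) 𝔽)ˣ)
    (huC : ∀ t, (uC t : Matrix (Fin ℓ → ZMod r) (Fin ℓ → ZMod r) 𝔽)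
      = lam • Matrix.of fun η ξ =>
          if ∀ i, i ≠ t → η i = ξ i then θ ^ (η t * ξ t).val else 0)
    (huU : ∀ t, (uU t : Matrix (Fin ℓ → ZMod r) (Fin ℓ → ZMod r) 𝔽)
      = Matrix.diagonal fun ξ => θ ^ ((ξ t).val * ((ξ t).val + r) / 2))
    (huD : ∀ s t : Fin ℓ, s < t →
      (uD s t : Matrix (Fin ℓ → ZMod r) (Fin ℓ → ZMod r) 𝔽)
        = Matrix.diagonal fun ξ => θ ^ (ξ s * ξ t).val)
    (G : Subgroup (Matrix (Fin ℓ → ZMod r) (Fin ℓ → ZMod r) 𝔽)ˣ)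
    (hG : G = Subgroup.closure (Set.range uC ∪ Set.range uU ∪
      {x | ∃ s t : Fin ℓ, s < t ∧ x = uD s t})) :
    IsPGroup r (Abelianization ↥G) := by
  subst hlam hG
  obtain rfl : Cb = fourierMatrix (AddChar.zmodChar r hθ.pow_eq_one) := Matrix.ext hCb
  exact weil_abelianization_rgroup_general (hr.ne_two_of_dvd_nat dvd_rfl)
    (AddChar.zmodChar_primitive_of_primitive_root r hθ) (· < ·) uC uU uD
    (fun t => (huC t).trans (siteMatrix_weilMatrix_zmodChar hθ.pow_eq_one t).symm)
    (fun t => (huU t).trans (siteMatrix_chirpMatrix_zmodChar hr hθ.pow_eq_one t).symm) huD
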